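/- arXiv:2502.00885 — 4 statements merged into one kernel-verified Lean document; each statement's English description precedes it below -/
import Mathlib

section
/- Let d ≥ 1, let S be a real symmetric d×d matrix, let γ ∈ ℝ, and let A be the 2d×2d block matrix A = [[0, −I], [S, γ·I]] (i.e., Matrix.fromBlocks 0 (−1) S (γ • 1)). Suppose v ∈ ℝ^d is a nonzero vector with S·v = κ·v for some κ ∈ ℝ. Then both μ₊(γ, κ) and μ₋(γ, κ) are eigenvalues of A·Aᵀ; that is, for each choice of sign there exists a nonzero w ∈ ℝ^{2d} with (A·Aᵀ)·w = μ_±(γ, κ)·w. -/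
open Matrix

/-- The larger eigenvalue of the 2×2 block of `A·Aᵀ`. -/
noncomputable def muPlus (γ κ : ℝ) : ℝ :=
  (γ ^ 2 + κ ^ 2 + 1 + Real.sqrt ((γ ^ 2 + κ ^ 2 + 1) ^ 2 - 4 * κ ^ 2)) / 2

/-- The smaller eigenvalue of the 2×2 block of `A·Aᵀ`. -/
noncomputable def muMinus (γ κ : ℝ) : ℝ :=
  (γ ^ 2 + κ ^ 2 + 1 - Real.sqrt ((γ ^ 2 + κ ^ 2 + 1) ^ 2 - 4 * κ ^ 2)) / 2

theorem eig_pair (γ κ μ : ℝ) (h : μ ^ 2 - (γ ^ 2 + κ ^ 2 + 1) * μ + κ ^ 2 = 0) :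
    ∃ a b : ℝ, (a ≠ 0 ∨ b ≠ 0) ∧ a - γ * b = μ * a ∧
      -γ * a + (γ ^ 2 + κ ^ 2) * b = μ * b := by
  by_cases hγ : γ = 0
  · subst hγ
    have h2 : (1 - μ) * (κ ^ 2 - μ) = 0 := by linear_combination h
    rcases mul_eq_zero.mp h2 with h3 | h3
    · exact ⟨1, 0, Or.inl one_ne_zero, by linear_combination h3, by ring⟩
    · exact ⟨0, 1, Or.inr one_ne_zero, by ring, by linear_combination h3⟩
  · exact ⟨γ, 1 - μ, Or.inl hγ, by ring, by linear_combination h⟩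

theorem eig_vec (d : ℕ) (S : Matrix (Fin d) (Fin d) ℝ) (hS : S.IsSymm) (γ : ℝ)
    (v : Fin d → ℝ) (hv : v ≠ 0) (κ : ℝ) (hκ : S.mulVec v = κ • v) (μ : ℝ)
    (h : μ ^ 2 - (γ ^ 2 + κ ^ 2 + 1) * μ + κ ^ 2 = 0) :
    ∃ w : Fin d ⊕ Fin d → ℝ, w ≠ 0 ∧
      ((Matrix.fromBlocks 0 (-1) S (γ • 1) : Matrix (Fin d ⊕ Fin d) (Fin d ⊕ Fin d) ℝ) *
        (Matrix.fromBlocks 0 (-1) S (γ • 1))ᵀ).mulVec w = μ • w := by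
  obtain ⟨a, b, hab, h1, h2⟩ := eig_pair γ κ μ h
  obtain ⟨i, hi⟩ := Function.ne_iff.mp hv
  refine ⟨Sum.elim (a • v) (b • v), ?_, ?_⟩
  · intro h0
    rcases hab with ha | hb
    · have := congrFun h0 (Sum.inl i)
      simp [ha] at this
      exact hi this
    · have := congrFun h0 (Sum.inr i)
      simp [hb] at this
      exact hi this
  · rw [Matrix.fromBlocks_transpose, hS.eq, ← Matrix.mulVec_mulVec,
      Matrix.fromBlocks_mulVec, Matrix.fromBlocks_mulVec]
    ext j
    rcases j with j | j
    · simp [Matrix.mulVec_smul, Matrix.mulVec_add, Matrix.neg_mulVec, Matrix.smul_mulVec, hκ]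
      linear_combination v j * h1
    · simp [Matrix.mulVec_smul, Matrix.mulVec_add, Matrix.neg_mulVec, Matrix.smul_mulVec, hκ]
      linear_combination v j * h2

/-- If `v ≠ 0` is an eigenvector of the symmetric matrix `S` with eigenvalue `κ`, then
both `μ₊(γ, κ)` and `μ₋(γ, κ)` are eigenvalues of `A·Aᵀ`, where
`A = [[0, −I], [S, γ·I]]`. -/
theorem muPlusMinus_mem_eigenvalues_AAT (d : ℕ) (hd : 1 ≤ d)
    (S : Matrix (Fin d) (Fin d) ℝ) (hS : S.IsSymm) (γ : ℝ)
    (A : Matrix (Fin d ⊕ Fin d) (Fin d ⊕ Fin d) ℝ)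
    (hA : A = Matrix.fromBlocks 0 (-1) S (γ • 1))
    (v : Fin d → ℝ) (hv : v ≠ 0) (κ : ℝ) (hκ : S.mulVec v = κ • v) :
    (∃ w : Fin d ⊕ Fin d → ℝ, w ≠ 0 ∧ (A * Aᵀ).mulVec w = muPlus γ κ • w) ∧
    (∃ w : Fin d ⊕ Fin d → ℝ, w ≠ 0 ∧ (A * Aᵀ).mulVec w = muMinus γ κ • w) := by
  subst hA
  have hs : Real.sqrt ((γ ^ 2 + κ ^ 2 + 1) ^ 2 - 4 * κ ^ 2) ^ 2 =
      (γ ^ 2 + κ ^ 2 + 1) ^ 2 - 4 * κ ^ 2 := by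
    apply Real.sq_sqrt
    have e : (γ ^ 2 + κ ^ 2 + 1) ^ 2 - 4 * κ ^ 2 =
        (γ ^ 2 + (κ - 1) ^ 2) * (γ ^ 2 + (κ + 1) ^ 2) := by ring
    rw [e]
    positivity
  refine ⟨eig_vec d S hS γ v hv κ hκ _ ?_, eig_vec d S hS γ v hv κ hκ _ ?_⟩
  · unfold muPlus
    linear_combination hs / 4
  · unfold muMinus
    linear_combination hs / 4
end

section
/- Let d ≥ 1, let S be a real symmetric d×d matrix with eigenvalues κ₁, …, κ_d (listed with multiplicity, e.g. via the spectral theorem for symmetric matrices), let γ ∈ ℝ, and let A = [[0, −I], [S, γ·I]] be the corresponding 2d×2d block matrix. Then the spectrum of A·Aᵀ over ℝ equals the set { μ : ∃ i ∈ {1, …, d}, μ = μ₊(γ, κ_i) or μ = μ₋(γ, κ_i) }. -/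
open Matrix

/-- Up to sign, the determinant of a block matrix with scalar blocks in three positions. -/
theorem sq_det_blocks (d : ℕ) (a b : ℝ) (D : Matrix (Fin d) (Fin d) ℝ) :
    (fromBlocks (a • 1) (b • 1) (b • 1) D : Matrix (Fin d ⊕ Fin d) (Fin d ⊕ Fin d) ℝ).det ^ 2
      = (a • D - (b ^ 2) • 1).det ^ 2 := by
  set M : Matrix (Fin d ⊕ Fin d) (Fin d ⊕ Fin d) ℝ := fromBlocks (a • 1) (b • 1) (b • 1) D with hM
  let J : Matrix (Fin d ⊕ Fin d) (Fin d ⊕ Fin d) ℝ := fromBlocks 0 1 (-1) 0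
  let J' : Matrix (Fin d ⊕ Fin d) (Fin d ⊕ Fin d) ℝ := fromBlocks 0 (-1) 1 0
  have hJ : J * J' = 1 := by
    simp [J, J', fromBlocks_multiply, fromBlocks_one]
  have hdet : J.det * J'.det = 1 := by rw [← det_mul, hJ, det_one]
  have hN : M * (J * M * J') = fromBlocks (a • D - (b ^ 2) • 1) 0 0 (a • D - (b ^ 2) • 1) := by
    simp only [hM, J, J', fromBlocks_multiply]
    congr 1 <;> simp [sub_eq_add_neg, smul_smul, pow_two, mul_comm, add_comm]
  have h2 := congrArg det hN
  rw [det_mul, det_mul, det_mul, det_fromBlocks_zero₂₁] at h2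
  linear_combination h2 - M.det ^ 2 * hdet

/-- The determinant of a quadratic polynomial in a real symmetric matrix. -/
theorem det_quad (d : ℕ) (S : Matrix (Fin d) (Fin d) ℝ) (hS : S.IsHermitian) (p q : ℝ) :
    (p • 1 + q • (S * S)).det = ∏ i, (p + q * hS.eigenvalues i ^ 2) := by
  have h := hS.spectral_theorem
  rw [Unitary.conjStarAlgAut_apply] at h
  set U : Matrix (Fin d) (Fin d) ℝ := (hS.eigenvectorUnitary : Matrix (Fin d) (Fin d) ℝ)
  set V : Matrix (Fin d) (Fin d) ℝ := star U
  have hUV : U * V = 1 := Unitary.coe_mul_star_self hS.eigenvectorUnitary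
  have hVU : V * U = 1 := Unitary.coe_star_mul_self hS.eigenvectorUnitary
  set E : Matrix (Fin d) (Fin d) ℝ := diagonal (RCLike.ofReal ∘ hS.eigenvalues) with hE
  have h' : S = U * E * V := h
  have hSS : S * S = U * (E * E) * V := by
    rw [h']
    calc U * E * V * (U * E * V) = U * E * (V * U) * E * V := by simp only [Matrix.mul_assoc]
      _ = _ := by rw [hVU]; simp only [Matrix.mul_assoc, Matrix.mul_one, Matrix.one_mul]
  have hQ : p • 1 + q • (S * S) = U * (p • 1 + q • (E * E)) * V := by
    rw [hSS, Matrix.mul_add, Matrix.add_mul]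
    simp [hUV]
  have hD : p • 1 + q • (E * E) = diagonal (fun i => p + q * hS.eigenvalues i ^ 2) := by
    rw [hE, diagonal_mul_diagonal, ← diagonal_one, ← diagonal_smul, ← diagonal_smul,
      diagonal_add]
    congr 1
    ext i
    simp [pow_two]
  have hdet : U.det * V.det = 1 := by rw [← det_mul, hUV, det_one]
  rw [hQ, hD, det_mul, det_mul, det_diagonal]
  linear_combination (∏ i, (p + q * hS.eigenvalues i ^ 2)) * hdet

theorem quad_root_iff (γ κ μ : ℝ) :
    (μ - 1) * (μ - γ ^ 2) - γ ^ 2 + -(μ - 1) * κ ^ 2 = 0 ↔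
      μ = muPlus γ κ ∨ μ = muMinus γ κ := by
  have hs := Real.sq_sqrt (show 0 ≤ (γ ^ 2 + κ ^ 2 + 1) ^ 2 - 4 * κ ^ 2 by
    nlinarith [sq_nonneg (κ ^ 2 - 1), sq_nonneg (γ * κ), sq_nonneg γ, sq_nonneg (γ ^ 2)])
  have key : (μ - 1) * (μ - γ ^ 2) - γ ^ 2 + -(μ - 1) * κ ^ 2
      = (μ - muPlus γ κ) * (μ - muMinus γ κ) := by
    unfold muPlus muMinus
    linear_combination (1 / 4) * hs
  rw [key, mul_eq_zero, sub_eq_zero, sub_eq_zero]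

/-- Let `S` be a real symmetric `d×d` matrix with eigenvalues `κ₁, …, κ_d` (with
multiplicity, via the spectral theorem), and let `A = [[0, −I], [S, γ·I]]`. Then the
spectrum of `A·Aᵀ` over `ℝ` is exactly `{ μ₊(γ, κᵢ), μ₋(γ, κᵢ) : 1 ≤ i ≤ d }`. -/
theorem spectrum_AAT_eq (d : ℕ) (hd : 1 ≤ d)
    (S : Matrix (Fin d) (Fin d) ℝ) (hS : S.IsHermitian) (γ : ℝ)
    (A : Matrix (Fin d ⊕ Fin d) (Fin d ⊕ Fin d) ℝ)
    (hA : A = Matrix.fromBlocks 0 (-1) S (γ • 1)) :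
    spectrum ℝ (A * Aᵀ)
      = {μ : ℝ | ∃ i : Fin d, μ = muPlus γ (hS.eigenvalues i)
          ∨ μ = muMinus γ (hS.eigenvalues i)} := by
  subst hA
  have hT : Sᵀ = S := by simpa using hS.eq
  ext μ
  have hM : algebraMap ℝ (Matrix (Fin d ⊕ Fin d) (Fin d ⊕ Fin d) ℝ) μ
      - fromBlocks 0 (-1) S (γ • 1) * (fromBlocks 0 (-1) S (γ • 1))ᵀ
      = fromBlocks ((μ - 1) • 1) (γ • 1) (γ • 1) ((μ - γ ^ 2) • 1 - S * S) := by
    rw [Algebra.algebraMap_eq_smul_one, ← fromBlocks_one, fromBlocks_smul, fromBlocks_transpose,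
      fromBlocks_multiply, sub_eq_add_neg, fromBlocks_neg, fromBlocks_add]
    congr 1 <;> simp [hT, sub_eq_add_neg, add_smul, smul_smul, pow_two]
    abel
  have hQ : (μ - 1) • ((μ - γ ^ 2) • 1 - S * S) - (γ ^ 2) • 1
      = ((μ - 1) * (μ - γ ^ 2) - γ ^ 2) • 1 + (-(μ - 1)) • (S * S) := by
    module
  rw [spectrum.mem_iff, hM, isUnit_iff_isUnit_det, isUnit_iff_ne_zero, not_not,
    ← sq_eq_zero_iff, sq_det_blocks, sq_eq_zero_iff, hQ, det_quad d S hS,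
    Finset.prod_eq_zero_iff]
  simp only [Finset.mem_univ, true_and, quad_root_iff, Set.mem_ofPred_eq]
end

section
/- Let d ≥ 1, let S be a real symmetric positive definite d×d matrix, let γ > 0, and let A = [[0, −I], [S, γ·I]] be the corresponding 2d×2d block matrix. Then the smallest eigenvalue of the (symmetric positive semidefinite) matrix A·Aᵀ is at most the square of the smallest eigenvalue of S. Equivalently, the smallest singular value σ_min of A satisfies σ_min ≤ θ_min, where θ_min is the smallest singular value of S. -/
open Matrix

/-- For a symmetric positive definite `S` and `γ > 0`, the smallest eigenvalue of
`A·Aᵀ`, where `A = [[0, −I], [S, γ·I]]`, is at most the square of the smallest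
eigenvalue of `S`; equivalently `σ_min(A) ≤ θ_min(S)`. -/
theorem smallest_eigenvalue_AAT_le (d : ℕ) (hd : 1 ≤ d) (γ : ℝ) (hγ : 0 < γ)
    (S : Matrix (Fin d) (Fin d) ℝ) (hS : S.PosDef)
    (A : Matrix (Fin d ⊕ Fin d) (Fin d ⊕ Fin d) ℝ)
    (hA : A = Matrix.fromBlocks 0 (-1) S (γ • 1))
    (hAAT : (A * Aᵀ).IsHermitian) :
    (⨅ i, hAAT.eigenvalues i) ≤ (⨅ i, hS.1.eigenvalues i) ^ 2 := by
  haveI : Nonempty (Fin d) := ⟨⟨0, hd⟩⟩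
  obtain ⟨i, hi⟩ := exists_eq_ciInf_of_finite (f := hS.1.eigenvalues)
  rw [← hi]
  set θ := hS.1.eigenvalues i with hθ
  -- a root of the reduced characteristic polynomial
  obtain ⟨μ, hμ, hroot⟩ : ∃ μ ≤ θ ^ 2, μ ^ 2 - (1 + θ ^ 2 + γ ^ 2) * μ + θ ^ 2 = 0 := by
    have hc : ContinuousOn (fun x : ℝ => x ^ 2 - (1 + θ ^ 2 + γ ^ 2) * x + θ ^ 2)
        (Set.Icc 0 (θ ^ 2)) := by fun_prop
    have h0 : (0 : ℝ) ∈ Set.Icc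
        ((θ ^ 2) ^ 2 - (1 + θ ^ 2 + γ ^ 2) * (θ ^ 2) + θ ^ 2)
        ((0 : ℝ) ^ 2 - (1 + θ ^ 2 + γ ^ 2) * 0 + θ ^ 2) :=
      ⟨by nlinarith [sq_nonneg (γ * θ)], by nlinarith [sq_nonneg θ]⟩
    obtain ⟨μ, hm, he⟩ := intermediate_value_Icc' (sq_nonneg θ) hc h0
    exact ⟨μ, hm.2, he⟩
  let v : Fin d → ℝ := ⇑(hS.1.eigenvectorBasis i)
  have hv : S *ᵥ v = θ • v := hS.1.mulVec_eigenvectorBasis i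
  have hv0 : v ≠ 0 := by
    intro h
    apply hS.1.eigenvectorBasis.orthonormal.ne_zero i
    ext j
    exact congrFun h j
  have hST : Sᵀ = S := by simpa using hS.1.eq
  have hM : A * Aᵀ = Matrix.fromBlocks 1 (-(γ • 1)) (-(γ • 1)) (S * S + (γ ^ 2) • 1) := by
    rw [hA, Matrix.fromBlocks_transpose, Matrix.fromBlocks_multiply]
    simp [hST, smul_smul, pow_two]
  let w : Fin d ⊕ Fin d → ℝ := Sum.elim (γ • v) ((1 - μ) • v)
  have hw : (A * Aᵀ) *ᵥ w = μ • w := by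
    rw [hM, Matrix.fromBlocks_mulVec]
    ext j
    rcases j with j | j
    · simp [w, Matrix.neg_mulVec, Matrix.smul_mulVec, Matrix.mulVec_smul]
      ring
    · simp [w, Matrix.neg_mulVec, Matrix.smul_mulVec, Matrix.mulVec_smul, Matrix.add_mulVec,
        ← Matrix.mulVec_mulVec, hv]
      linear_combination (v j) * hroot
  have hw0 : w ≠ 0 := by
    intro h
    apply hv0
    ext j
    have := congrFun h (Sum.inl j)
    simpa [w, hγ.ne'] using this
  have hmem : μ ∈ spectrum ℝ (A * Aᵀ) := by
    rw [← Matrix.spectrum_toLin']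
    exact (Module.End.hasEigenvalue_of_hasEigenvector
      (Module.End.hasEigenvector_iff.mpr
        ⟨Module.End.mem_eigenspace_iff.mpr (by simpa using hw), hw0⟩)).mem_spectrum
  rw [hAAT.spectrum_real_eq_range_eigenvalues] at hmem
  obtain ⟨k, hk⟩ := hmem
  exact (ciInf_le (Set.finite_range _).bddBelow k).trans (hk.le.trans hμ)
end

section
/- Let κ > 0 be fixed. The function g : (0, ∞) → ℝ defined by g(γ) = (γ² + κ² + 1 − √((γ² + κ² + 1)² − 4κ²))/2 is strictly decreasing on (0, ∞); that is, for all 0 < γ₁ < γ₂ one has g(γ₂) < g(γ₁). -/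
/-- For fixed `κ > 0`, the function
`g(γ) = (γ² + κ² + 1 − √((γ² + κ² + 1)² − 4κ²))/2` is strictly decreasing on `(0, ∞)`. -/
theorem strictAntiOn_muMinus_in_gamma (κ : ℝ) (hκ : 0 < κ) :
    StrictAntiOn
      (fun γ : ℝ =>
        (γ ^ 2 + κ ^ 2 + 1 - Real.sqrt ((γ ^ 2 + κ ^ 2 + 1) ^ 2 - 4 * κ ^ 2)) / 2)
      (Set.Ioi 0) := by
  intro a ha b hb hab
  have ha' : 0 < a := ha
  have hst : a ^ 2 + κ ^ 2 + 1 < b ^ 2 + κ ^ 2 + 1 := by nlinarith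
  have hs : 2 * κ ≤ a ^ 2 + κ ^ 2 + 1 := by nlinarith [sq_nonneg (κ - 1), sq_nonneg a]
  show (b ^ 2 + κ ^ 2 + 1 - Real.sqrt ((b ^ 2 + κ ^ 2 + 1) ^ 2 - 4 * κ ^ 2)) / 2 <
    (a ^ 2 + κ ^ 2 + 1 - Real.sqrt ((a ^ 2 + κ ^ 2 + 1) ^ 2 - 4 * κ ^ 2)) / 2
  generalize a ^ 2 + κ ^ 2 + 1 = s at *
  generalize b ^ 2 + κ ^ 2 + 1 = t at *
  have hS : 0 ≤ s ^ 2 - 4 * κ ^ 2 := by nlinarith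
  have hsq := Real.sq_sqrt hS
  have hlt : Real.sqrt (s ^ 2 - 4 * κ ^ 2) < s := by
    rw [Real.sqrt_lt' (by linarith)]
    nlinarith [pow_pos hκ 2]
  have key : Real.sqrt (s ^ 2 - 4 * κ ^ 2) + (t - s) < Real.sqrt (t ^ 2 - 4 * κ ^ 2) := by
    apply Real.lt_sqrt_of_sq_lt
    nlinarith [mul_pos (sub_pos.2 hst) (sub_pos.2 hlt)]
  linarith
end
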